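/- Let X = {(z₁,z₂) ∈ ℂ² : |z₁| = |z₂|, |z₁| ≤ 1} and for ε > 0 let V_ε = {(z₁,z₂) : ||z₁| − |z₂|| < ε, |z₁| ≤ 1, |z₂| ≤ 1}. Then for every ε > 0, every function holomorphic on a neighborhood of V_ε extends holomorphically to a neighborhood of the closed bidisc {|z₁| ≤ 1, |z₂| ≤ 1}. In particular the singular Levi-flat hypersurface X, whose boundary is the torus 𝕋 = {|z₁| = |z₂| = 1}, is not a Stein compact (it has no neighborhood basis of Stein open sets). -/

import Mathlib

noncomputable section

/-- The holomorphic hull of a compact `K` inside an open `V ⊆ ℂ²`. -/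
def holHull (V K : Set (ℂ × ℂ)) : Set (ℂ × ℂ) :=
  {z ∈ V | ∀ f : ℂ × ℂ → ℂ, DifferentiableOn ℂ f V →
    ∀ c : ℝ, (∀ w ∈ K, ‖f w‖ ≤ c) → ‖f z‖ ≤ c}

/-- An open subset of ℂ² is Stein iff it is holomorphically convex. -/
def IsSteinOpen (V : Set (ℂ × ℂ)) : Prop :=
  IsOpen V ∧ ∀ K : Set (ℂ × ℂ), K ⊆ V → IsCompact K → IsCompact (holHull V K)

/-- A compact set is a Stein compact if it has a fundamental system of Stein open
neighborhoods. -/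
def IsSteinCompact (K : Set (ℂ × ℂ)) : Prop :=
  ∀ U : Set (ℂ × ℂ), IsOpen U → K ⊆ U →
    ∃ V : Set (ℂ × ℂ), IsSteinOpen V ∧ K ⊆ V ∧ V ⊆ U

namespace LeviCone

open MeasureTheory Set Metric Filter Topology

/-- Lebesgue measure on one period. -/
def perMeas : Measure ℝ := volume.restrict (Ioc 0 (2 * Real.pi))

instance perMeas_finite : IsFiniteMeasure perMeas := by
  unfold perMeas; infer_instance

lemma perMeas_prod : perMeas.prod perMeas =
    (volume : Measure (ℝ × ℝ)).restrict (Ioc 0 (2 * Real.pi) ×ˢ Ioc 0 (2 * Real.pi)) := by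
  unfold perMeas
  rw [Measure.prod_restrict]; rfl

lemma perMeas_integrable {F : ℝ × ℝ → ℂ} (hF : Continuous F) :
    Integrable F (perMeas.prod perMeas) := by
  rw [perMeas_prod]
  have : IntegrableOn F (Icc 0 (2 * Real.pi) ×ˢ Icc 0 (2 * Real.pi)) volume :=
    hF.continuousOn.integrableOn_compact (isCompact_Icc.prod isCompact_Icc)
  exact this.mono_set (prod_mono Ioc_subset_Icc_self Ioc_subset_Icc_self)

lemma perMeas_circle (h : ℂ → ℂ) (R : ℝ) :
    ∫ θ, circleMap 0 R θ * h (circleMap 0 R θ) ∂perMeas =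
      Complex.I⁻¹ * circleIntegral h 0 R := by
  unfold perMeas circleIntegral
  rw [intervalIntegral.integral_of_le (by positivity), ← integral_const_mul]
  congr 1; ext θ
  rw [deriv_circleMap, smul_eq_mul]
  field_simp [Complex.I_ne_zero]

lemma kernel_hasFDerivAt {φ a b : ℂ} {z : ℂ × ℂ} (h1 : a - z.1 ≠ 0) (h2 : b - z.2 ≠ 0) :
    HasFDerivAt (fun z : ℂ × ℂ => φ * ((a - z.1)⁻¹ * (b - z.2)⁻¹))
      ((φ * (((a - z.1)⁻¹) ^ 2 * (b - z.2)⁻¹)) • ContinuousLinearMap.fst ℂ ℂ ℂ +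
      (φ * ((a - z.1)⁻¹ * ((b - z.2)⁻¹) ^ 2)) • ContinuousLinearMap.snd ℂ ℂ ℂ) z := by
  have d1 : HasFDerivAt (fun z : ℂ × ℂ => (a - z.1)⁻¹)
      ((((a - z.1)⁻¹) ^ 2) • ContinuousLinearMap.fst ℂ ℂ ℂ) z := by
    have := (hasDerivAt_inv h1).comp_hasFDerivAt z
      ((hasFDerivAt_fst (𝕜 := ℂ) (p := z)).const_sub a)
    refine this.congr_fderiv ?_
    ext <;> simp
  have d2 : HasFDerivAt (fun z : ℂ × ℂ => (b - z.2)⁻¹)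
      ((((b - z.2)⁻¹) ^ 2) • ContinuousLinearMap.snd ℂ ℂ ℂ) z := by
    have := (hasDerivAt_inv h2).comp_hasFDerivAt z
      ((hasFDerivAt_snd (𝕜 := ℂ) (p := z)).const_sub b)
    refine this.congr_fderiv ?_
    ext <;> simp
  have := (d1.mul d2).const_mul φ
  refine this.congr_fderiv ?_
  ext <;> simp [-mul_eq_mul_left_iff] <;> ring

lemma param_differentiableAt {O : Set (ℂ × ℂ)} (hO : IsOpen O) {F : ℂ × ℂ → ℝ × ℝ → ℂ}
    {F' : ℂ × ℂ → ℝ × ℝ → (ℂ × ℂ →L[ℂ] ℂ)}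
    (hF'cont : ContinuousOn (fun q : (ℂ × ℂ) × (ℝ × ℝ) => F' q.1 q.2) (O ×ˢ univ))
    (hFcont : ∀ z ∈ O, Continuous (F z))
    (hd : ∀ z ∈ O, ∀ p, HasFDerivAt (fun z => F z p) (F' z p) z) :
    DifferentiableOn ℂ (fun z => ∫ p, F z p ∂(perMeas.prod perMeas)) O := by
  intro z₀ hz₀
  obtain ⟨δ, hδ, hsub⟩ := nhds_basis_closedBall.mem_iff.1 (hO.mem_nhds hz₀)
  obtain ⟨C, hC⟩ := ((isCompact_closedBall z₀ δ).prod
    ((isCompact_Icc (a := (0 : ℝ)) (b := 2 * Real.pi)).prod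
      (isCompact_Icc (a := (0 : ℝ)) (b := 2 * Real.pi)))).exists_bound_of_continuousOn
    (hF'cont.mono (prod_mono hsub (subset_univ _)))
  have m1 : ∀ᶠ z in 𝓝 z₀, AEStronglyMeasurable (F z) (perMeas.prod perMeas) := by
    filter_upwards [hO.mem_nhds hz₀] with z hz
    exact (hFcont z hz).aestronglyMeasurable
  have m2 : AEStronglyMeasurable (F' z₀) (perMeas.prod perMeas) := by
    have : Continuous (F' z₀) :=
      hF'cont.comp_continuous (f := fun p : ℝ × ℝ => (z₀, p)) (by fun_prop)
        (fun p => ⟨hz₀, mem_univ _⟩)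
    exact this.aestronglyMeasurable
  have m3 : ∀ᵐ p ∂(perMeas.prod perMeas), ∀ z ∈ closedBall z₀ δ, ‖F' z p‖ ≤ C := by
    rw [perMeas_prod]
    filter_upwards [ae_restrict_mem (measurableSet_Ioc.prod measurableSet_Ioc)] with p hp z hz
    exact hC (z, p) ⟨hz, Ioc_subset_Icc_self hp.1, Ioc_subset_Icc_self hp.2⟩
  have key := hasFDerivAt_integral_of_dominated_of_fderiv_le (𝕜 := ℂ)
    (closedBall_mem_nhds z₀ hδ) m1 (perMeas_integrable (hFcont z₀ hz₀)) m2 m3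
    (integrable_const _) (Eventually.of_forall fun p z hz => hd z (hsub hz) p)
  exact key.differentiableAt.differentiableWithinAt

lemma kernel_differentiableOn {φ a b : ℝ × ℝ → ℂ} {R : ℝ} (hφ : Continuous φ)
    (ha : Continuous a) (hb : Continuous b) (haR : ∀ p, ‖a p‖ = R) (hbR : ∀ p, ‖b p‖ = R) :
    DifferentiableOn ℂ (fun z : ℂ × ℂ =>
      ∫ p, φ p * ((a p - z.1)⁻¹ * (b p - z.2)⁻¹) ∂(perMeas.prod perMeas)) (ball 0 R) := by
  have hne1 : ∀ z ∈ ball (0 : ℂ × ℂ) R, ∀ p, a p - z.1 ≠ 0 := by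
    intro z hz p h
    have h1 := norm_fst_le z
    rw [← sub_eq_zero.1 h, haR] at h1
    rw [mem_ball_zero_iff] at hz; linarith
  have hne2 : ∀ z ∈ ball (0 : ℂ × ℂ) R, ∀ p, b p - z.2 ≠ 0 := by
    intro z hz p h
    have h1 := norm_snd_le z
    rw [← sub_eq_zero.1 h, hbR] at h1
    rw [mem_ball_zero_iff] at hz; linarith
  refine param_differentiableAt isOpen_ball ?_ ?_
    (fun z hz p => kernel_hasFDerivAt (φ := φ p) (hne1 z hz p) (hne2 z hz p))
  · have c1 : ContinuousOn (fun q : (ℂ × ℂ) × (ℝ × ℝ) => (a q.2 - q.1.1)⁻¹)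
        (ball (0 : ℂ × ℂ) R ×ˢ univ) :=
      ContinuousOn.inv₀ (by fun_prop) (fun q hq => hne1 _ hq.1 _)
    have c2 : ContinuousOn (fun q : (ℂ × ℂ) × (ℝ × ℝ) => (b q.2 - q.1.2)⁻¹)
        (ball (0 : ℂ × ℂ) R ×ˢ univ) :=
      ContinuousOn.inv₀ (by fun_prop) (fun q hq => hne2 _ hq.1 _)
    have c3 : ContinuousOn (fun q : (ℂ × ℂ) × (ℝ × ℝ) => φ q.2)
        (ball (0 : ℂ × ℂ) R ×ˢ univ) := by fun_prop
    exact ((c3.mul ((c1.pow 2).mul c2)).smul continuousOn_const).add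
      ((c3.mul (c1.mul (c2.pow 2))).smul continuousOn_const)
  · intro z hz
    exact hφ.mul (((ha.sub continuous_const).inv₀ (hne1 z hz)).mul
      ((hb.sub continuous_const).inv₀ (hne2 z hz)))

/-- torus Cauchy integrand. -/
def torK (f : ℂ × ℂ → ℂ) (R : ℝ) (z : ℂ × ℂ) (p : ℝ × ℝ) : ℂ :=
  (circleMap 0 R p.2 * (circleMap 0 R p.2 * circleMap 0 1 p.1) *
    f (circleMap 0 R p.2, circleMap 0 R p.2 * circleMap 0 1 p.1)) *
    ((circleMap 0 R p.2 - z.1)⁻¹ * (circleMap 0 R p.2 * circleMap 0 1 p.1 - z.2)⁻¹)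

lemma norm_circleMap' {R : ℝ} (hR : 0 < R) (θ : ℝ) : ‖circleMap 0 R θ‖ = R := by
  simp [abs_of_pos hR]

lemma torK_pre_continuous {U : Set (ℂ × ℂ)} {f : ℂ × ℂ → ℂ} {R : ℝ} (hR : 0 < R)
    (hf : ContinuousOn f U) (hU : ∀ z : ℂ × ℂ, ‖z.1‖ = ‖z.2‖ → ‖z.1‖ ≤ R → z ∈ U) :
    Continuous (fun p : ℝ × ℝ => circleMap 0 R p.2 * (circleMap 0 R p.2 * circleMap 0 1 p.1) *
    f (circleMap 0 R p.2, circleMap 0 R p.2 * circleMap 0 1 p.1)) := by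
  have c1 : Continuous (fun p : ℝ × ℝ => circleMap 0 R p.2) :=
    (continuous_circleMap 0 R).comp continuous_snd
  have c2 : Continuous (fun p : ℝ × ℝ => circleMap 0 1 p.1) :=
    (continuous_circleMap 0 1).comp continuous_fst
  refine (c1.mul (c1.mul c2)).mul (hf.comp_continuous (c1.prodMk (c1.mul c2)) fun p => ?_)
  apply hU
  · simp
  · simp [abs_of_pos hR]

lemma torK_continuous {U : Set (ℂ × ℂ)} {f : ℂ × ℂ → ℂ} {R : ℝ} (hR : 0 < R)
    (hf : ContinuousOn f U) (hU : ∀ z : ℂ × ℂ, ‖z.1‖ = ‖z.2‖ → ‖z.1‖ ≤ R → z ∈ U)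
    {z : ℂ × ℂ} (hz : ‖z‖ < R) : Continuous (torK f R z) := by
  have c1 : Continuous (fun p : ℝ × ℝ => circleMap 0 R p.2) :=
    (continuous_circleMap 0 R).comp continuous_snd
  have c2 : Continuous (fun p : ℝ × ℝ => circleMap 0 1 p.1) :=
    (continuous_circleMap 0 1).comp continuous_fst
  refine (torK_pre_continuous hR hf hU).mul (((c1.sub continuous_const).inv₀ fun p h => ?_).mul
    (((c1.mul c2).sub continuous_const).inv₀ fun p h => ?_))
  · have h1 := norm_fst_le z
    have h' : circleMap 0 R p.2 - z.1 = 0 := h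
    rw [← sub_eq_zero.1 h', norm_circleMap' hR] at h1
    linarith
  · have h1 := norm_snd_le z
    have h' : circleMap 0 R p.2 * circleMap 0 1 p.1 - z.2 = 0 := h
    rw [← sub_eq_zero.1 h', norm_mul, norm_circleMap' hR, norm_circleMap' one_pos] at h1
    linarith

lemma torK_radius {U : Set (ℂ × ℂ)} {f : ℂ × ℂ → ℂ} {s R : ℝ} (hs : 0 < s) (hsR : s ≤ R)
    (hUo : IsOpen U) (hf : DifferentiableOn ℂ f U)
    (hU : ∀ z : ℂ × ℂ, ‖z.1‖ = ‖z.2‖ → ‖z.1‖ ≤ R → z ∈ U)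
    {z : ℂ × ℂ} (hz : ‖z‖ < s) :
    ∫ p, torK f R z p ∂(perMeas.prod perMeas) = ∫ p, torK f s z p ∂(perMeas.prod perMeas) := by
  rw [integral_prod _ (perMeas_integrable
      (torK_continuous (hs.trans_le hsR) hf.continuousOn hU (hz.trans_le hsR))),
    integral_prod _ (perMeas_integrable (torK_continuous hs hf.continuousOn
      (fun w h1 h2 => hU w h1 (h2.trans hsR)) hz))]
  congr 1; ext ψ
  set ω := circleMap 0 1 ψ with hω
  have hωn : ‖ω‖ = 1 := norm_circleMap' one_pos ψ
  let h : ℂ → ℂ := fun ζ => ζ * ω * f (ζ, ζ * ω) * ((ζ - z.1)⁻¹ * (ζ * ω - z.2)⁻¹)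
  have e : ∀ ρ : ℝ, ∫ θ, torK f ρ z (ψ, θ) ∂perMeas = Complex.I⁻¹ * circleIntegral h 0 ρ := by
    intro ρ
    rw [← perMeas_circle]
    congr 1; ext θ
    simp only [torK, h, ← hω]; ring
  rw [e, e]
  congr 1
  have hd : ∀ ζ : ℂ, s ≤ ‖ζ‖ → ‖ζ‖ ≤ R → DifferentiableAt ℂ h ζ := by
    intro ζ h1 h2
    have n1 : ζ - z.1 ≠ 0 := by
      intro h0
      have := norm_fst_le z
      rw [← sub_eq_zero.1 h0] at this; linarith
    have n2 : ζ * ω - z.2 ≠ 0 := by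
      intro h0
      have := norm_snd_le z
      rw [← sub_eq_zero.1 h0, norm_mul, hωn] at this; linarith
    have hmem : (ζ, ζ * ω) ∈ U := hU _ (by simp [hωn]) h2
    have hfd : DifferentiableAt ℂ (fun ζ : ℂ => f (ζ, ζ * ω)) ζ :=
      DifferentiableAt.comp ζ (g := f) (f := fun ζ : ℂ => (ζ, ζ * ω))
        (hf.differentiableAt (hUo.mem_nhds hmem)) (by fun_prop)
    have i1 : DifferentiableAt ℂ (fun ζ : ℂ => (ζ - z.1)⁻¹) ζ :=
      DifferentiableAt.inv (by fun_prop) n1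
    have i2 : DifferentiableAt ℂ (fun ζ : ℂ => (ζ * ω - z.2)⁻¹) ζ :=
      DifferentiableAt.inv (by fun_prop) n2
    exact ((by fun_prop : DifferentiableAt ℂ (fun ζ : ℂ => ζ * ω) ζ).mul hfd).mul (i1.mul i2)
  refine Complex.circleIntegral_eq_of_differentiable_on_annulus_off_countable hs hsR
    countable_empty ?_ ?_
  · intro ζ hζ
    rw [Set.mem_sdiff, mem_closedBall_zero_iff, mem_ball_zero_iff, not_lt] at hζ
    exact (hd ζ hζ.2 hζ.1).continuousAt.continuousWithinAt
  · intro ζ hζ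
    rw [sdiff_empty, Set.mem_sdiff, mem_closedBall_zero_iff, mem_ball_zero_iff, not_le] at hζ
    exact hd ζ hζ.2.le hζ.1.le

lemma torK_small {U : Set (ℂ × ℂ)} {f : ℂ × ℂ → ℂ} {s : ℝ} (hs : 0 < s)
    (hUo : IsOpen U) (hf : DifferentiableOn ℂ f U) (hU : closedBall 0 s ⊆ U)
    {z : ℂ × ℂ} (hz : ‖z‖ < s) :
    ∫ p, torK f s z p ∂(perMeas.prod perMeas) = (2 * Real.pi) ^ 2 * f z := by
  have hU' : ∀ z : ℂ × ℂ, ‖z.1‖ ≤ s → ‖z.2‖ ≤ s → z ∈ U := fun z h1 h2 => hU (by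
    rw [mem_closedBall_zero_iff]; exact max_le h1 h2)
  rw [integral_prod_symm _ (perMeas_integrable (torK_continuous hs hf.continuousOn
      (fun w h1 h2 => hU' w h2 (h1 ▸ h2)) hz))]
  have hz1 : ‖z.1‖ < s := (norm_fst_le z).trans_lt hz
  have hz2 : ‖z.2‖ < s := (norm_snd_le z).trans_lt hz
  have inner : ∀ θ : ℝ, ∫ ψ, torK f s z (ψ, θ) ∂perMeas =
      circleMap 0 s θ * ((2 * Real.pi) * ((circleMap 0 s θ - z.1)⁻¹ •
        f (circleMap 0 s θ, z.2))) := by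
    intro θ
    set ζ := circleMap 0 s θ with hζ
    have hζn : ‖ζ‖ = s := norm_circleMap' hs θ
    have hζ0 : ζ ≠ 0 := by rw [← norm_pos_iff, hζn]; exact hs
    let k : ℂ → ℂ := fun ω => f (ζ, ζ * ω)
    have hk : DifferentiableOn ℂ k (closedBall 0 1) := by
      refine hf.comp (f := fun ω : ℂ => (ζ, ζ * ω)) (by fun_prop) fun ω hω => ?_
      rw [mem_closedBall_zero_iff] at hω
      refine hU' _ hζn.le ?_
      simp only [norm_mul, hζn]
      nlinarith
    have hw : z.2 / ζ ∈ ball (0 : ℂ) 1 := by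
      rw [mem_ball_zero_iff, norm_div, hζn, div_lt_one hs]; exact hz2
    have cau := hk.circleIntegral_sub_inv_smul hw
    have hkw : k (z.2 / ζ) = f (ζ, z.2) := by
      simp only [k]; rw [mul_div_cancel₀ _ hζ0]
    have e : ∀ ψ, torK f s z (ψ, θ) = (ζ * (ζ - z.1)⁻¹) * (circleMap 0 1 ψ *
        ((circleMap 0 1 ψ - z.2 / ζ)⁻¹ • k (circleMap 0 1 ψ))) := by
      intro ψ
      simp only [torK, ← hζ, k, smul_eq_mul]
      have : ζ * circleMap 0 1 ψ - z.2 = ζ * (circleMap 0 1 ψ - z.2 / ζ) := by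
        field_simp
      rw [this, mul_inv]
      have h1 : ζ * ζ⁻¹ = 1 := mul_inv_cancel₀ hζ0
      linear_combination (ζ * circleMap 0 1 ψ * f (ζ, ζ * circleMap 0 1 ψ) * (ζ - z.1)⁻¹ *
        (circleMap 0 1 ψ - z.2 / ζ)⁻¹) * h1
    simp_rw [e]
    rw [integral_const_mul, perMeas_circle (fun ω => (ω - z.2 / ζ)⁻¹ • k ω), cau, hkw]
    simp only [smul_eq_mul]
    field_simp [Complex.I_ne_zero]
  simp_rw [inner]
  rw [perMeas_circle (fun ζ => (2 * Real.pi) * ((ζ - z.1)⁻¹ • f (ζ, z.2)))]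
  have hk : DifferentiableOn ℂ (fun ζ : ℂ => f (ζ, z.2)) (closedBall 0 s) := by
    refine hf.comp (f := fun ω : ℂ => (ω, z.2)) (by fun_prop) fun ω hω => ?_
    rw [mem_closedBall_zero_iff] at hω
    exact hU' _ hω hz2.le
  have cau := hk.circleIntegral_sub_inv_smul (w := z.1) (by rwa [mem_ball_zero_iff])
  rw [circleIntegral.integral_const_mul, cau]
  simp only [smul_eq_mul, Prod.mk.eta]
  field_simp [Complex.I_ne_zero]

lemma cone_isCompact : IsCompact {z : ℂ × ℂ | ‖z.1‖ = ‖z.2‖ ∧ ‖z.1‖ ≤ 1} := by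
  refine (isCompact_closedBall (0 : ℂ × ℂ) 1).of_isClosed_subset ?_ ?_
  · have c1 : Continuous (fun z : ℂ × ℂ => ‖z.1‖) := by fun_prop
    have c2 : Continuous (fun z : ℂ × ℂ => ‖z.2‖) := by fun_prop
    exact (isClosed_eq c1 c2).inter (isClosed_le c1 continuous_const)
  · rintro z ⟨h1, h2⟩
    rw [mem_closedBall_zero_iff]; exact max_le h2 (h1 ▸ h2)

/-- Functions holomorphic near the cone extend to a polydisc of radius `> 1`. -/
lemma cone_extend {U : Set (ℂ × ℂ)} (hUo : IsOpen U)
    (hX : {z : ℂ × ℂ | ‖z.1‖ = ‖z.2‖ ∧ ‖z.1‖ ≤ 1} ⊆ U) {f : ℂ × ℂ → ℂ}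
    (hf : DifferentiableOn ℂ f U) :
    ∃ (r : ℝ) (g : ℂ × ℂ → ℂ), 1 < r ∧ DifferentiableOn ℂ g (ball 0 r) ∧ g =ᶠ[𝓝 0] f := by
  obtain ⟨δ, hδ, hthick⟩ := cone_isCompact.exists_thickening_subset_open hUo hX
  have hr : (1 : ℝ) < 1 + δ / 2 := by linarith
  set r := 1 + δ / 2 with hrdef
  have hr0 : 0 < r := by linarith
  have hU : ∀ z : ℂ × ℂ, ‖z.1‖ = ‖z.2‖ → ‖z.1‖ ≤ r → z ∈ U := by
    intro z h1 h2
    apply hthick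
    rw [mem_thickening_iff]
    have hn : ‖((r⁻¹ : ℝ) : ℂ)‖ = r⁻¹ := by
      rw [Complex.norm_real, Real.norm_of_nonneg (by positivity)]
    refine ⟨((r⁻¹ : ℝ) : ℂ) • z, ⟨?_, ?_⟩, ?_⟩
    · simp [h1]
    · simp only [Prod.smul_fst, smul_eq_mul, norm_mul, hn]
      rw [inv_mul_le_iff₀ hr0]; linarith
    · have hzn : ‖z‖ ≤ r := max_le h2 (h1 ▸ h2)
      have : z - ((r⁻¹ : ℝ) : ℂ) • z = ((1 - r⁻¹ : ℝ) : ℂ) • z := by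
        push_cast; rw [sub_smul, one_smul]
      have hi : r⁻¹ ≤ 1 := inv_le_one_of_one_le₀ hr.le
      rw [dist_eq_norm, this, norm_smul, Complex.norm_real, Real.norm_of_nonneg (by linarith)]
      calc (1 - r⁻¹) * ‖z‖ ≤ (1 - r⁻¹) * r := by gcongr
        _ = r - 1 := by field_simp
        _ < δ := by linarith
  have h0 : (0 : ℂ × ℂ) ∈ U := hX (by simp)
  obtain ⟨s₀, hs₀, hsub₀⟩ := nhds_basis_closedBall.mem_iff.1 (hUo.mem_nhds h0)
  obtain ⟨s, hs, hss, hsr⟩ : ∃ s, 0 < s ∧ s ≤ s₀ ∧ s ≤ r :=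
    ⟨min s₀ r, lt_min hs₀ hr0, min_le_left _ _, min_le_right _ _⟩
  have hsub : closedBall 0 s ⊆ U := (closedBall_subset_closedBall hss).trans hsub₀
  refine ⟨r, fun z => ((2 * Real.pi : ℂ) ^ 2)⁻¹ * ∫ p, torK f r z p ∂(perMeas.prod perMeas),
    hr, ?_, ?_⟩
  · refine DifferentiableOn.const_mul ?_ _
    exact kernel_differentiableOn (torK_pre_continuous hr0 hf.continuousOn hU)
      ((continuous_circleMap 0 r).comp continuous_snd)
      (((continuous_circleMap 0 r).comp continuous_snd).mul
        ((continuous_circleMap 0 1).comp continuous_fst))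
      (fun p => norm_circleMap' hr0 _)
      (fun p => by simp [abs_of_pos hr0])
  · filter_upwards [ball_mem_nhds (0 : ℂ × ℂ) hs] with z hz
    rw [mem_ball_zero_iff] at hz
    rw [torK_radius hs hsr hUo hf hU hz, torK_small hs hUo hf hsub hz]
    have : (Real.pi : ℂ) ≠ 0 := by exact_mod_cast Real.pi_ne_zero
    field_simp

/-- Identity theorem along a path in a complex line through the origin. -/
lemma slice_identity {U W : Set (ℂ × ℂ)} (hUo : IsOpen U) (hWo : IsOpen W) {f g : ℂ × ℂ → ℂ}
    (hf : DifferentiableOn ℂ f U) (hg : DifferentiableOn ℂ g W) (hfg : g =ᶠ[𝓝 0] f)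
    (v : ℂ × ℂ) {S : Set ℂ} (hS : IsPreconnected S) (h0 : (0 : ℂ) ∈ S)
    (hSU : ∀ t ∈ S, t • v ∈ U) (hSW : ∀ t ∈ S, t • v ∈ W) :
    ∀ t ∈ S, g (t • v) = f (t • v) := by
  have hc : Continuous (fun t : ℂ => t • v) := by fun_prop
  have ana : ∀ {V : Set (ℂ × ℂ)} {h : ℂ × ℂ → ℂ}, IsOpen V → DifferentiableOn ℂ h V →
      (∀ t ∈ S, t • v ∈ V) → AnalyticOnNhd ℂ (fun t : ℂ => h (t • v)) S := by
    intro V h hV hh hSV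
    have : DifferentiableOn ℂ (fun t : ℂ => h (t • v)) ((fun t : ℂ => t • v) ⁻¹' V) :=
      hh.comp (f := fun t : ℂ => t • v) (by fun_prop) (fun t ht => ht)
    exact (this.analyticOnNhd (hV.preimage hc)).mono hSV
  have ev : (fun t : ℂ => g (t • v)) =ᶠ[𝓝 0] (fun t : ℂ => f (t • v)) := by
    have ht : Tendsto (fun t : ℂ => t • v) (𝓝 0) (𝓝 0) := by
      simpa using hc.tendsto 0
    exact ht.eventually hfg
  exact (ana hWo hg hSW).eqOn_of_preconnected_of_eventuallyEq (ana hUo hf hSU) hS h0 ev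

lemma disc_slice {U : Set (ℂ × ℂ)} (hUo : IsOpen U) {r : ℝ} (hr : 1 < r) {f g : ℂ × ℂ → ℂ}
    (hf : DifferentiableOn ℂ f U) (hg : DifferentiableOn ℂ g (ball 0 r)) (hfg : g =ᶠ[𝓝 0] f)
    {v : ℂ × ℂ} (hv : ‖v‖ ≤ 1) (hvU : ∀ t : ℂ, ‖t‖ ≤ 1 → t • v ∈ U) : g v = f v := by
  have := slice_identity hUo isOpen_ball hf hg hfg v (S := closedBall 0 1)
    (convex_closedBall 0 1).isPreconnected (by simp)
    (fun t ht => hvU t (by simpa using ht))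
    (fun t ht => by
      rw [mem_closedBall_zero_iff] at ht
      rw [mem_ball_zero_iff, norm_smul]
      nlinarith [norm_nonneg t, norm_nonneg v]) 1 (by simp)
  simpa using this

lemma disc_max {h : ℂ → ℂ} {r c : ℝ} (hr : 1 < r) (hh : DifferentiableOn ℂ h (ball 0 r))
    (hc : ∀ ζ : ℂ, ‖ζ‖ = 1 → ‖h ζ‖ ≤ c) {ζ : ℂ} (hζ : ‖ζ‖ ≤ 1) : ‖h ζ‖ ≤ c := by
  refine Complex.norm_le_of_forall_mem_frontier_norm_le (U := ball (0 : ℂ) 1) isBounded_ball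
    ?_ (fun w hw => ?_) ?_
  · apply DifferentiableOn.diffContOnCl
    rw [closure_ball _ one_ne_zero]
    exact hh.mono (closedBall_subset_ball hr)
  · rw [frontier_ball _ one_ne_zero] at hw
    exact hc w (by simpa using hw)
  · rw [closure_ball _ one_ne_zero]; simpa using hζ

lemma bidisc_max {g : ℂ × ℂ → ℂ} {r c : ℝ} (hr : 1 < r) (hg : DifferentiableOn ℂ g (ball 0 r))
    (hc : ∀ z : ℂ × ℂ, ‖z.1‖ = 1 → ‖z.2‖ = 1 → ‖g z‖ ≤ c) {z : ℂ × ℂ} (hz1 : ‖z.1‖ ≤ 1)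
    (hz2 : ‖z.2‖ ≤ 1) : ‖g z‖ ≤ c := by
  refine disc_max (h := fun ζ => g (ζ, z.2)) hr ?_ (fun ζ hζ => ?_) hz1
  · refine hg.comp (f := fun ζ : ℂ => (ζ, z.2)) (by fun_prop) fun ζ hζ => ?_
    rw [mem_ball_zero_iff] at hζ ⊢
    exact max_lt hζ (by simp only; linarith)
  · refine disc_max (h := fun w => g (ζ, w)) hr ?_ (fun w hw => hc _ hζ hw) hz2
    refine hg.comp (f := fun w : ℂ => (ζ, w)) (by fun_prop) fun w hw => ?_
    rw [mem_ball_zero_iff] at hw ⊢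
    exact max_lt (by simp only; linarith) hw

lemma cone_not_stein :
    ¬ IsSteinCompact {z : ℂ × ℂ | ‖z.1‖ = ‖z.2‖ ∧ ‖z.1‖ ≤ 1} := by
  intro hst
  obtain ⟨V, ⟨hVo, hVhull⟩, hXV, hVU⟩ := hst {(1, 0)}ᶜ isOpen_compl_singleton (by
    rintro z ⟨h1, -⟩ (rfl : z = (1, 0))
    simp at h1)
  let X : Set (ℂ × ℂ) := {z : ℂ × ℂ | ‖z.1‖ = ‖z.2‖ ∧ ‖z.1‖ ≤ 1}
  have hcl : IsClosed (holHull V X) := (hVhull X hXV cone_isCompact).isClosed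
  have h0V : (0 : ℂ × ℂ) ∈ V := hXV (by simp)
  have h1V : ((1 : ℂ), (0 : ℂ)) ∉ V := fun h => hVU h rfl
  -- the exit set of the real segment
  let γ : ℝ → ℂ × ℂ := fun t => (t : ℂ) • ((1 : ℂ), (0 : ℂ))
  have hγ : Continuous γ := by
    simp only [γ]; fun_prop
  let E : Set ℝ := Icc 0 1 ∩ γ ⁻¹' Vᶜ
  have hEc : IsCompact E := isCompact_Icc.inter_right (hVo.isClosed_compl.preimage hγ)
  have hEne : E.Nonempty := ⟨1, by simp, by simpa [γ] using h1V⟩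
  obtain ⟨τ, ⟨⟨hτ0, hτ1⟩, hτV⟩, hτmin⟩ := hEc.exists_isLeast hEne
  have hτpos : 0 < τ := by
    rcases hτ0.eq_or_lt with h | h
    · exact absurd h0V (by simpa [γ, ← h, Prod.mk_zero_zero] using hτV)
    · exact h
  have hin : ∀ t ∈ Ico 0 τ, γ t ∈ V := by
    intro t ht
    by_contra hn
    exact absurd (hτmin ⟨⟨ht.1, ht.2.le.trans hτ1⟩, hn⟩) (not_le.2 ht.2)
  have hhull : ∀ t ∈ Ico 0 τ, γ t ∈ holHull V X := by
    intro t ht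
    refine ⟨hin t ht, fun f hf c hc => ?_⟩
    obtain ⟨r, g, hr, hg, hgf⟩ := cone_extend hVo hXV hf
    have e : g (γ t) = f (γ t) := by
      refine slice_identity hVo isOpen_ball hf hg hgf ((1 : ℂ), (0 : ℂ))
        (S := (fun t : ℝ => (t : ℂ)) '' Ico 0 τ)
        (isPreconnected_Ico.image _ Complex.continuous_ofReal.continuousOn)
        ⟨0, ⟨le_rfl, hτpos⟩, by simp⟩ ?_ ?_ _ ⟨t, ht, rfl⟩
      · rintro _ ⟨u, hu, rfl⟩
        exact hin u hu
      · rintro _ ⟨u, hu, rfl⟩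
        rw [mem_ball_zero_iff, norm_smul]
        simp only [Complex.norm_real, Real.norm_of_nonneg hu.1]
        have : ‖((1 : ℂ), (0 : ℂ))‖ = 1 := by simp [Prod.norm_def]
        rw [this]; linarith [hu.2]
    rw [← e]
    refine bidisc_max hr hg (fun z h1 h2 => ?_) ?_ ?_
    · have hzX : z ∈ X := ⟨h1.trans h2.symm, h1.le⟩
      rw [disc_slice hVo hr hf hg hgf (max_le h1.le h2.le) (fun t ht => hXV ?_)]
      · exact hc z hzX
      · exact ⟨by simp [h1, h2], by simpa [h1] using ht⟩
    · simp only [γ, Prod.smul_fst, smul_eq_mul, mul_one, Complex.norm_real,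
        Real.norm_of_nonneg ht.1]
      linarith [ht.2]
    · simp [γ]
  have hlim : γ τ ∈ holHull V X := by
    have hcl' : IsClosed (γ ⁻¹' holHull V X) := hcl.preimage hγ
    have : closure (Ico 0 τ) ⊆ γ ⁻¹' holHull V X := closure_minimal hhull hcl'
    rw [closure_Ico hτpos.ne] at this
    exact this ⟨hτ0, le_rfl⟩
  exact hτV hlim.1

end LeviCone

/-- for every ε > 0, every function holomorphic near
`V_ε = {||z₁| − |z₂|| < ε, |z₁| ≤ 1, |z₂| ≤ 1}` extends holomorphically to a neighborhood
of the closed bidisc; in particular, the singular Levi-flat hypersurface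
`X = {|z₁| = |z₂| ≤ 1}` (whose boundary is the torus) is not a Stein compact. -/
theorem levi_flat_cone_not_stein :
    let X : Set (ℂ × ℂ) := {z | ‖z.1‖ = ‖z.2‖ ∧ ‖z.1‖ ≤ 1}
    let D : Set (ℂ × ℂ) := {z | ‖z.1‖ ≤ 1 ∧ ‖z.2‖ ≤ 1}
    (∀ ε : ℝ, 0 < ε →
      let Vε : Set (ℂ × ℂ) := {z | |‖z.1‖ - ‖z.2‖| < ε ∧ ‖z.1‖ ≤ 1 ∧ ‖z.2‖ ≤ 1}
      ∀ (U : Set (ℂ × ℂ)), IsOpen U → Vε ⊆ U →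
        ∀ f : ℂ × ℂ → ℂ, DifferentiableOn ℂ f U →
          ∃ (W : Set (ℂ × ℂ)) (g : ℂ × ℂ → ℂ), IsOpen W ∧ D ⊆ W ∧
            DifferentiableOn ℂ g W ∧ Set.EqOn g f Vε) ∧
    ¬ IsSteinCompact X := by
  refine ⟨fun ε hε U hUo hVU f hf => ?_, LeviCone.cone_not_stein⟩
  obtain ⟨r, g, hr, hg, hgf⟩ := LeviCone.cone_extend hUo (fun z hz => hVU (by
    refine ⟨?_, hz.2, hz.1 ▸ hz.2⟩
    rw [hz.1]; simpa using hε)) hf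
  refine ⟨Metric.ball 0 r, g, Metric.isOpen_ball, ?_, hg, ?_⟩
  · rintro z ⟨h1, h2⟩
    rw [mem_ball_zero_iff]
    exact (max_le h1 h2).trans_lt hr
  · rintro z ⟨h1, h2, h3⟩
    refine LeviCone.disc_slice hUo hr hf hg hgf (max_le h2 h3) (fun t ht => hVU ⟨?_, ?_, ?_⟩)
    · simp only [Prod.smul_fst, Prod.smul_snd, smul_eq_mul, norm_mul]
      rw [← mul_sub, abs_mul, abs_norm]
      nlinarith [norm_nonneg t, abs_nonneg (‖z.1‖ - ‖z.2‖)]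
    · simp only [Prod.smul_fst, smul_eq_mul, norm_mul]
      nlinarith [norm_nonneg t, norm_nonneg z.1]
    · simp only [Prod.smul_snd, smul_eq_mul, norm_mul]
      nlinarith [norm_nonneg t, norm_nonneg z.2]

end
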